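/- Let T_{L,L+1} be the transfer matrices defined recursively as in the transfer-matrix Ansatz (with α ≠ 0), let v_1 = (α+β, α), and define v_{L+1} = T_{L,L+1} v_L for L ≥ 1. Then for every L ≥ 1, the sum of the entries of v_L equals Z_L = 2^{binomial(L-1,2)} (1+2α)^{L-1} (1+β)^{L-1} (2α+β). -/

import Mathlib

open scoped BigOperators Classical

/-- Bitvectors of length `L`, with entries in `ZMod 2`. -/
abbrev BV (L : ℕ) := Fin L → ZMod 2

/-- `phi j` flips component `j` of a bitvector. -/
def phi {L : ℕ} (j : Fin L) (b : BV L) : BV L :=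
  fun i => b i + if i = j then 1 else 0

/-- `psi j` flips components `j` and `j+1` of a bitvector (only `j` if `j` is the last index). -/
def psi {L : ℕ} (j : Fin L) (b : BV L) : BV L :=
  fun i => b i + if i = j ∨ (i : ℕ) = (j : ℕ) + 1 then 1 else 0

/-- The transition matrix of the asymmetric annihilation process on `L+1` sites
(entry `(c,b)` is the rate of the transition from `b` to `c`). -/
noncomputable def Mmat (L : ℕ) (α β : ℝ) : Matrix (BV (L+1)) (BV (L+1)) ℝ :=
  Matrix.of fun c b =>
    if c = b then
      -(α + ((Finset.univ.filter fun j : Fin (L+1) => (j : ℕ) + 1 < L + 1 ∧ b j = 1).card : ℝ)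
        + β * if b (Fin.last L) = 1 then 1 else 0)
    else
      (if c = phi 0 b then α else 0)
      + (if ∃ j : Fin (L+1), (j : ℕ) + 1 < L + 1 ∧ b j = 1 ∧ c = psi j b then 1 else 0)
      + (if b (Fin.last L) = 1 ∧ c = phi (Fin.last L) b then β else 0)

/-- Splitting a bitvector of length `L+1` according to its first (most significant) bit:
bitvectors starting with `0` come first in the binary-value order. -/
def splitEquiv (L : ℕ) : BV (L+1) ≃ (BV L ⊕ BV L) where
  toFun b := if b 0 = 0 then Sum.inl (Fin.tail b) else Sum.inr (Fin.tail b)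
  invFun s := Sum.elim (Fin.cons 0) (Fin.cons 1) s
  left_inv b := by
    by_cases h : b 0 = 0
    · simp only [if_pos h, Sum.elim_inl]
      conv_rhs => rw [← Fin.cons_self_tail b]
      rw [h]
    · have h1 : b 0 = 1 := by
        have : ∀ x : ZMod 2, x = 0 ∨ x = 1 := by decide
        rcases this (b 0) with h0 | h0
        · exact absurd h0 h
        · exact h0
      simp only [if_neg h, Sum.elim_inr]
      conv_rhs => rw [← Fin.cons_self_tail b]
      rw [h1]
  right_inv s := by
    rcases s with b | b
    · simp [Fin.cons_zero, Fin.tail_cons]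
    · simp [Fin.cons_zero, Fin.tail_cons, (by decide : ¬ (1 : ZMod 2) = 0)]

/-- The Kronecker product `σ ⊗ 1` where `σ = [[0,1],[1,0]]` and `1` is the identity
of size `2^L`: it flips the first (most significant) bit. -/
def SK (L : ℕ) : Matrix (BV (L+1)) (BV (L+1)) ℝ :=
  Matrix.of fun b c => if b = phi 0 c then 1 else 0

mutual
/-- The upper block `T_1^{(L)}` (here `L = n+1`) of the transfer matrix. -/
noncomputable def Tone (α β : ℝ) : (n : ℕ) → Matrix (BV (n+1)) (BV (n+1)) ℝ
  | 0 => Matrix.of fun b c =>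
      if b 0 = 0 then (if c 0 = 0 then 1 + β + α*β else α + β + α*β)
      else (if c 0 = 0 then α else 1)
  | n+1 =>
      (Matrix.reindex (splitEquiv (n+1)).symm (splitEquiv (n+1)).symm)
        (Matrix.fromBlocks
          (Tone α β n + α⁻¹ • Ttwo α β n)
          ((2:ℝ) • Ttwo α β n + α⁻¹ • Ttwo α β n)
          (SK n * Ttwo α β n)
          (α⁻¹ • Ttwo α β n))

/-- The lower block `T_2^{(L)}` (here `L = n+1`) of the transfer matrix. -/
noncomputable def Ttwo (α β : ℝ) : (n : ℕ) → Matrix (BV (n+1)) (BV (n+1)) ℝ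
  | 0 => Matrix.of fun b c =>
      if b 0 = 0 then (if c 0 = 0 then α + α*β else α*β)
      else (if c 0 = 0 then 0 else α)
  | n+1 =>
      (Matrix.reindex (splitEquiv (n+1)).symm (splitEquiv (n+1)).symm)
        (Matrix.fromBlocks
          ((2:ℝ) • Ttwo α β n)
          (Ttwo α β n * SK n)
          0
          (Ttwo α β n))
end

/-- The rectangular transfer matrix `T_{L,L+1}` (here `L = n+1`), of size `2^{L+1} × 2^L`,
obtained by stacking `T_1^{(L)}` on top of `T_2^{(L)}`. -/
noncomputable def Tmat (α β : ℝ) (n : ℕ) : Matrix (BV (n+2)) (BV (n+1)) ℝ :=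
  Matrix.of fun r c =>
    Sum.elim (fun b => Tone α β n b c) (fun b => Ttwo α β n b c) (splitEquiv (n+1) r)

/-- The recursively defined steady-state vectors: `v_1 = (α+β, α)` and
`v_{L+1} = T_{L,L+1} v_L` (here `v α β n` is `v_{n+1}`). -/
noncomputable def vvec (α β : ℝ) : (n : ℕ) → (BV (n+1) → ℝ)
  | 0 => fun b => if b 0 = 0 then α + β else α
  | n+1 => (Tmat α β n).mulVec (vvec α β n)

/-- Splitting a sum over bitvectors according to the first bit. -/
lemma sum_split (L : ℕ) (f : BV (L+1) → ℝ) :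
    ∑ b, f b = ∑ b, f ((splitEquiv L).symm (Sum.inl b)) + ∑ b, f ((splitEquiv L).symm (Sum.inr b)) := by
  rw [← Equiv.sum_comp (splitEquiv L).symm, Fintype.sum_sum_type]

lemma SK_colsum (n : ℕ) (c : BV (n+1)) : ∑ b, SK n b c = 1 := by
  simp [SK]

lemma sum_unique_BV1 (f : BV 1 → ℝ) : ∑ b, f b = f (fun _ => 0) + f (fun _ => 1) := by
  rw [← Equiv.sum_comp (Equiv.funUnique (Fin 1) (ZMod 2)).symm]
  exact Fin.sum_univ_two _

lemma Ttwo_colsum (α β : ℝ) (n : ℕ) : ∀ c, ∑ b, Ttwo α β n b c = 2 ^ n * (α * (1 + β)) := by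
  induction n with
  | zero =>
    intro c
    rw [sum_unique_BV1]
    by_cases h : c 0 = 0 <;> simp [Ttwo, h] <;> ring
  | succ n ih =>
    intro c
    obtain ⟨s, rfl⟩ := (splitEquiv (n+1)).symm.surjective c
    rw [sum_split]
    rcases s with c | c
    · simp [Ttwo, ← Finset.mul_sum, ih]
      ring
    · simp only [Ttwo, Matrix.reindex_apply, Matrix.submatrix_apply, Equiv.symm_symm,
        Equiv.apply_symm_apply, Matrix.fromBlocks_apply₁₂, Matrix.fromBlocks_apply₂₂,
        Matrix.mul_apply]
      rw [Finset.sum_comm]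
      simp only [← Finset.sum_mul, ← Finset.mul_sum, ih, SK_colsum]
      ring

lemma Tone_colsum (α β : ℝ) (hα : α ≠ 0) (n : ℕ) :
    ∀ c, ∑ b, Tone α β n b c = 2 ^ n * ((1 + α) * (1 + β)) := by
  induction n with
  | zero =>
    intro c
    rw [sum_unique_BV1]
    by_cases h : c 0 = 0 <;> simp [Tone, h] <;> ring
  | succ n ih =>
    intro c
    obtain ⟨s, rfl⟩ := (splitEquiv (n+1)).symm.surjective c
    rw [sum_split]
    rcases s with c | c
    · simp only [Tone, Matrix.reindex_apply, Matrix.submatrix_apply, Equiv.symm_symm,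
        Equiv.apply_symm_apply, Matrix.fromBlocks_apply₁₁, Matrix.fromBlocks_apply₂₁,
        Matrix.mul_apply, Matrix.add_apply, Matrix.smul_apply, smul_eq_mul,
        Finset.sum_add_distrib]
      rw [Finset.sum_comm (f := fun x y => SK n x y * Ttwo α β n y c)]
      simp only [← Finset.sum_mul, ← Finset.mul_sum, ih, Ttwo_colsum, SK_colsum, one_mul]
      field_simp
      ring
    · simp only [Tone, Matrix.reindex_apply, Matrix.submatrix_apply, Equiv.symm_symm,
        Equiv.apply_symm_apply, Matrix.fromBlocks_apply₁₂, Matrix.fromBlocks_apply₂₂,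
        Matrix.add_apply, Matrix.smul_apply, smul_eq_mul, Finset.sum_add_distrib]
      simp only [← Finset.mul_sum, Ttwo_colsum]
      field_simp
      ring

lemma Tmat_colsum (α β : ℝ) (hα : α ≠ 0) (n : ℕ) (c : BV (n+1)) :
    ∑ b, Tmat α β n b c = 2 ^ n * ((1 + 2 * α) * (1 + β)) := by
  rw [sum_split]
  simp only [Tmat, Matrix.of_apply, Equiv.apply_symm_apply, Sum.elim_inl, Sum.elim_inr,
    Tone_colsum α β hα, Ttwo_colsum]
  ring

/-- For every `L ≥ 1` (here `L = n+1`), the sum of the entries of `v_L`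
equals the partition function `Z_L = 2^C(L-1,2) (1+2α)^{L-1} (1+β)^{L-1} (2α+β)`. -/
theorem statement2 (α β : ℝ) (hα : α ≠ 0) (n : ℕ) :
    ∑ b : BV (n+1), vvec α β n b =
      2 ^ (Nat.choose n 2) * (1 + 2*α) ^ n * (1 + β) ^ n * (2*α + β) := by
  induction n with
  | zero =>
    rw [sum_unique_BV1]
    simp [vvec]
    ring
  | succ n ih =>
    simp only [vvec, Matrix.mulVec, dotProduct]
    rw [Finset.sum_comm]
    simp only [← Finset.sum_mul, Tmat_colsum α β hα]
    rw [← Finset.mul_sum, ih, Nat.choose_succ_succ' n 1, Nat.choose_one_right, pow_add]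
    ring
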